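/- For every k ≥ 1, the reconfiguration distance in G^k between the shortest (s,t)-paths p^k_b and p^k_e satisfies 9(2^k − 1) ≤ dist(p^k_b, p^k_e) ≤ 11(2^k − 1); in particular, the diameter of the shortest-path reconfiguration graph of G^k is exponential in the number of vertices of G^k, which is 13k + 2. -/

import Mathlib

/-- Vertices of the graph `G^k`: `s`, `t`, vertices `x^{ℓ+1}_{i+1}` (for `ℓ : Fin k`, `i : Fin 7`)
and `y^{ℓ+1}_{i+1}` (for `ℓ : Fin k`, `i : Fin 6`).  A value `ℓ : Fin k` encodes level `ℓ+1`,
and an index `i : Fin 7` (resp. `Fin 6`) encodes the subscript `i+1`. -/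
inductive GVert (k : ℕ) : Type where
  | s : GVert k
  | t : GVert k
  | x (ℓ : Fin k) (i : Fin 7) : GVert k
  | y (ℓ : Fin k) (i : Fin 6) : GVert k
deriving DecidableEq, Fintype

/-- The (oriented) edge relation generating the graph `G^k`. -/
def gkRel (k : ℕ) : GVert k → GVert k → Prop
  | GVert.s, GVert.x ℓ _ => (ℓ : ℕ) = k - 1
  | GVert.x ℓ i, GVert.y ℓ' i' => ℓ = ℓ' ∧ ((i : ℕ) = (i' : ℕ) ∨ (i : ℕ) = (i' : ℕ) + 1)
  | GVert.y ℓ i, GVert.x ℓ' j => (ℓ : ℕ) = (ℓ' : ℕ) + 1 ∧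
      (((i : ℕ) = 0 ∨ (i : ℕ) = 2 ∨ (i : ℕ) = 4) ∨
        ((i : ℕ) = 1 ∧ (j : ℕ) = 0) ∨ ((i : ℕ) = 3 ∧ (j : ℕ) = 6) ∨
        ((i : ℕ) = 5 ∧ (j : ℕ) = 0))
  | GVert.y ℓ _, GVert.t => (ℓ : ℕ) = 0
  | _, _ => False

/-- The graph `G^k`. -/
def Gk (k : ℕ) : SimpleGraph (GVert k) := SimpleGraph.fromRel (gkRel k)

/-- `p` is a shortest `(s,t)`-path in `H`, recorded as the sequence of its `L+1` vertices;
its length `L` is required to equal the distance between `s` and `t`. -/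
def IsShortestSTPath {V : Type*} (H : SimpleGraph V) (s t : V) (L : ℕ)
    (p : Fin (L + 1) → V) : Prop :=
  p 0 = s ∧ p (Fin.last L) = t ∧ (∀ i : Fin L, H.Adj (p i.castSucc) (p i.succ)) ∧
    L = H.dist s t

/-- Two vertex sequences differ in exactly one position. -/
def DiffOne {N : ℕ} {α : Type*} (p q : Fin N → α) : Prop :=
  ∃ i, p i ≠ q i ∧ ∀ j, j ≠ i → p j = q j

/-- `ρ 0, ρ 1, …, ρ ℓ` is a reconfiguration sequence of length `ℓ` from the shortest
`(s,t)`-path `p` to the shortest `(s,t)`-path `q`: all its members are shortest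
`(s,t)`-paths and consecutive members differ in exactly one position. -/
def SPReconfSeq {V : Type*} (H : SimpleGraph V) (s t : V) (L : ℕ)
    (ρ : ℕ → (Fin (L + 1) → V)) (ℓ : ℕ) (p q : Fin (L + 1) → V) : Prop :=
  ρ 0 = p ∧ ρ ℓ = q ∧ (∀ i ≤ ℓ, IsShortestSTPath H s t L (ρ i)) ∧
    ∀ i < ℓ, DiffOne (ρ i) (ρ (i + 1))

/-- The path `p^k_b = s, x^k_1, y^k_1, x^{k-1}_1, y^{k-1}_1, …, x^1_1, y^1_1, t`. -/
def pbG (k : ℕ) : Fin (2 * k + 1 + 1) → GVert k := fun d =>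
  if h0 : (d : ℕ) = 0 then GVert.s
  else if h1 : (d : ℕ) ≤ 2 * k then
    if (d : ℕ) % 2 = 1 then GVert.x ⟨k - 1 - ((d : ℕ) - 1) / 2, by omega⟩ ⟨0, by omega⟩
    else GVert.y ⟨k - 1 - ((d : ℕ) - 1) / 2, by omega⟩ ⟨0, by omega⟩
  else GVert.t

/-- The path `p^k_e = s, x^k_7, y^k_6, x^{k-1}_1, y^{k-1}_1, …, x^1_1, y^1_1, t`. -/
def peG (k : ℕ) (hk : 1 ≤ k) : Fin (2 * k + 1 + 1) → GVert k := fun d =>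
  if (d : ℕ) = 1 then GVert.x ⟨k - 1, by omega⟩ ⟨6, by omega⟩
  else if (d : ℕ) = 2 then GVert.y ⟨k - 1, by omega⟩ ⟨5, by omega⟩
  else pbG k d

/-- Compatibility between the combined position `u` of a level and `w` of the level below. -/
def CompatLv (u w : ℕ) : Prop :=
  (u / 2 = 1 → w = 0) ∧ (u / 2 = 3 → w = 11) ∧ (u / 2 = 5 → w = 0)

/-- Valid abstract states. -/
def ValidSt (k : ℕ) (a : ℕ → ℕ) : Prop :=
  (∀ m < k, a m ≤ 11) ∧ ∀ m, m + 1 < k → CompatLv (a (m + 1)) (a m)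

/-- The potential function. -/
def potl : ℕ → (ℕ → ℕ) → ℤ
  | 0, _ => 0
  | n + 1, a => a n +
      (if a n ≤ 3 then 0
       else if a n ≤ 5 then potl n a
       else if a n ≤ 7 then 11 * (2 ^ n - 1)
       else if a n ≤ 9 then 2 * (11 * (2 ^ n - 1)) - potl n a
       else 2 * (11 * (2 ^ n - 1)))

lemma potl_congr (n : ℕ) (a b : ℕ → ℕ) (h : ∀ m < n, a m = b m) : potl n a = potl n b := by
  induction n with
  | zero => rfl
  | succ n ih =>
    simp only [potl]
    rw [h n (by omega), ih (fun m hm => h m (by omega))]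

lemma potl_zero (n : ℕ) (a : ℕ → ℕ) (h : 0 < n → a (n - 1) = 0) : potl n a = 0 := by
  cases n with
  | zero => rfl
  | succ n =>
    have : a n = 0 := h (by omega)
    simp [potl, this]

lemma potl_top (n : ℕ) (a : ℕ → ℕ) (h : 0 < n → a (n - 1) = 11) :
    potl n a = 11 * (2 ^ n - 1) := by
  cases n with
  | zero => simp [potl]
  | succ n =>
    have : a n = 11 := h (by omega)
    simp [potl, this]
    ring

lemma ValidSt.mono {k n : ℕ} {a : ℕ → ℕ} (h : ValidSt k a) (hn : n ≤ k) : ValidSt n a :=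
  ⟨fun m hm => h.1 m (by omega), fun m hm => h.2 m (by omega)⟩

lemma potl_lip (n : ℕ) (a b : ℕ → ℕ) (ha : ValidSt n a) (hb : ValidSt n b) (m : ℕ)
    (h1 : a m ≤ b m + 1) (h2 : b m ≤ a m + 1) (h : ∀ j, j ≠ m → a j = b j) :
    |potl n a - potl n b| ≤ 1 := by
  induction n with
  | zero => simp [potl]
  | succ n ih =>
    have ih := ih (ha.mono (by omega)) (hb.mono (by omega))
    by_cases hm : m = n
    · subst hm
      have e : potl m a = potl m b := potl_congr m a b (fun j hj => h j (by omega))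
      have key : ∀ c : ℕ → ℕ, ValidSt (m+1) c →
          ((c m / 2 = 1 → potl m c = 0) ∧ (c m / 2 = 3 → potl m c = 11 * (2 ^ m - 1)) ∧
          (c m / 2 = 5 → potl m c = 0)) := by
        intro c hc
        have hcc : 0 < m → CompatLv (c m) (c (m - 1)) := by
          intro hm
          have := hc.2 (m - 1) (by omega)
          rwa [Nat.sub_add_cancel hm] at this
        exact ⟨fun h => potl_zero _ _ fun h0 => (hcc h0).1 h,
          fun h => potl_top _ _ fun h0 => (hcc h0).2.1 h,
          fun h => potl_zero _ _ fun h0 => (hcc h0).2.2 h⟩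
      have ka := key a ha
      have kb := key b hb
      have ba := ha.1 m (by omega)
      have bb := hb.1 m (by omega)
      simp only [potl]
      rw [e] at ka ⊢
      generalize potl m b = P at *
      generalize (11 * (2 ^ m - 1) : ℤ) = M at *
      generalize a m = u at *
      generalize b m = v at *
      rw [abs_le]
      split_ifs <;> omega
    · have e := h n (by omega)
      simp only [potl]
      rw [e]
      rw [abs_le] at *
      split_ifs <;> constructor <;> linarith [ih.1, ih.2]

/-- Layer of a vertex. -/
def layV {k : ℕ} : GVert k → ℕ
  | GVert.s => 0
  | GVert.t => 2 * k + 1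
  | GVert.x ℓ _ => 2 * (k - 1 - ℓ) + 1
  | GVert.y ℓ _ => 2 * (k - 1 - ℓ) + 2

/-- Index of a vertex. -/
def idxV {k : ℕ} : GVert k → ℕ
  | GVert.s => 0
  | GVert.t => 0
  | GVert.x _ i => i
  | GVert.y _ i => i

lemma lay_rel {k : ℕ} (u v : GVert k) (h : gkRel k u v) : layV v = layV u + 1 := by
  cases u <;> cases v <;> simp only [gkRel] at h <;> simp only [layV]
  all_goals omega

lemma lay_adj {k : ℕ} (u v : GVert k) (h : (Gk k).Adj u v) :
    (layV v = layV u + 1 ∧ gkRel k u v) ∨ layV u = layV v + 1 := by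
  simp only [Gk, SimpleGraph.fromRel_adj] at h
  rcases h.2 with h | h
  · exact Or.inl ⟨lay_rel _ _ h, h⟩
  · exact Or.inr (lay_rel _ _ h)

lemma rel_adj {k : ℕ} (u v : GVert k) (h : gkRel k u v) : (Gk k).Adj u v := by
  simp only [Gk, SimpleGraph.fromRel_adj]
  refine ⟨?_, Or.inl h⟩
  rintro rfl
  have := lay_rel _ _ h
  omega

lemma lay_walk {k : ℕ} {u v : GVert k} (w : (Gk k).Walk u v) : layV v ≤ layV u + w.length := by
  induction w with
  | nil => simp
  | cons h p ih =>
    have := lay_adj _ _ h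
    simp only [SimpleGraph.Walk.length_cons]
    omega

lemma walk_of_seq {V : Type*} (H : SimpleGraph V) (L : ℕ) (p : Fin (L + 1) → V)
    (h : ∀ i : Fin L, H.Adj (p i.castSucc) (p i.succ)) (n : ℕ) (hn : n < L + 1) :
    ∃ w : H.Walk (p 0) (p ⟨n, hn⟩), w.length = n := by
  induction n with
  | zero => exact ⟨SimpleGraph.Walk.nil, rfl⟩
  | succ n ih =>
    obtain ⟨w, hw⟩ := ih (by omega)
    exact ⟨w.concat (h ⟨n, by omega⟩), by simp [hw]⟩

lemma isShortest_of {k : ℕ} (p : Fin (2 * k + 1 + 1) → GVert k) (h0 : p 0 = GVert.s)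
    (h1 : p (Fin.last (2 * k + 1)) = GVert.t)
    (h : ∀ i : Fin (2 * k + 1), (Gk k).Adj (p i.castSucc) (p i.succ)) :
    IsShortestSTPath (Gk k) GVert.s GVert.t (2 * k + 1) p := by
  refine ⟨h0, h1, h, ?_⟩
  obtain ⟨w, hw⟩ := walk_of_seq (Gk k) _ p h (2 * k + 1) (by omega)
  have e : p ⟨2 * k + 1, by omega⟩ = GVert.t := h1
  have hle : (Gk k).dist (p 0) (p ⟨2 * k + 1, by omega⟩) ≤ 2 * k + 1 := by
    exact (SimpleGraph.dist_le w).trans hw.le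
  obtain ⟨w', hw'⟩ := w.reachable.exists_walk_length_eq_dist
  have h3 := lay_walk w'
  rw [hw'] at h3
  rw [e, h0] at h3 hle
  simp only [layV] at h3
  omega

lemma shortest_lay {k : ℕ} {p : Fin (2 * k + 1 + 1) → GVert k}
    (h : IsShortestSTPath (Gk k) GVert.s GVert.t (2 * k + 1) p) (n : ℕ) (hn : n < 2 * k + 1 + 1) :
    layV (p ⟨n, hn⟩) = n := by
  obtain ⟨h0, h1, h, -⟩ := h
  have A : ∀ n (hn : n < 2 * k + 1 + 1), layV (p ⟨n, hn⟩) ≤ n := by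
    intro n hn
    obtain ⟨w, hw⟩ := walk_of_seq (Gk k) _ p h n hn
    have := lay_walk w
    rw [hw, h0, show layV (GVert.s : GVert k) = 0 from rfl] at this
    omega
  have B : ∀ m n (hn : n < 2 * k + 1 + 1), n + m = 2 * k + 1 → n ≤ layV (p ⟨n, hn⟩) := by
    intro m
    induction m with
    | zero =>
      intro n hn e
      have : p ⟨n, hn⟩ = GVert.t := by
        rw [← h1]; congr 1; ext; simp; omega
      rw [this]; simp [layV]; omega
    | succ m ih =>
      intro n hn e
      have := ih (n + 1) (by omega) (by omega)
      have h' := lay_adj _ _ (h ⟨n, by omega⟩)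
      simp only [Fin.castSucc_mk, Fin.succ_mk] at h'
      omega
  have := A n hn
  have := B (2 * k + 1 - n) n hn (by omega)
  omega

/-- vertex at a natural position -/
def atPos {k : ℕ} (p : Fin (2 * k + 1 + 1) → GVert k) (d : ℕ) : GVert k :=
  if h : d < 2 * k + 1 + 1 then p ⟨d, h⟩ else GVert.s

/-- abstract state of a path -/
def stOf {k : ℕ} (p : Fin (2 * k + 1 + 1) → GVert k) (l : ℕ) : ℕ :=
  if l < k then idxV (atPos p (2 * (k - 1 - l) + 1)) + idxV (atPos p (2 * (k - 1 - l) + 2)) else 0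

lemma lay_x {k : ℕ} (v : GVert k) (l : ℕ) (hl : l < k) (h : layV v = 2 * (k - 1 - l) + 1) :
    ∃ i, v = GVert.x ⟨l, hl⟩ i := by
  cases v with
  | s => simp [layV] at h
  | t => simp [layV] at h; omega
  | x m i => simp [layV] at h; exact ⟨i, by congr 1; ext; simp; omega⟩
  | y m i => simp [layV] at h; omega

lemma lay_y {k : ℕ} (v : GVert k) (l : ℕ) (hl : l < k) (h : layV v = 2 * (k - 1 - l) + 2) :
    ∃ i, v = GVert.y ⟨l, hl⟩ i := by
  cases v with
  | s => simp [layV] at h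
  | t => simp [layV] at h; omega
  | x m i => simp [layV] at h; omega
  | y m i => simp [layV] at h; exact ⟨i, by congr 1; ext; simp; omega⟩

lemma shortest_rel {k : ℕ} {p : Fin (2 * k + 1 + 1) → GVert k}
    (h : IsShortestSTPath (Gk k) GVert.s GVert.t (2 * k + 1) p) (n : ℕ) (hn : n < 2 * k + 1) :
    gkRel k (atPos p n) (atPos p (n + 1)) := by
  have h1 := shortest_lay h n (by omega)
  have h2 := shortest_lay h (n + 1) (by omega)
  have h3 := lay_adj _ _ (h.2.2.1 ⟨n, hn⟩)
  simp only [Fin.castSucc_mk, Fin.succ_mk] at h3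
  rcases h3 with h3 | h3
  · simp only [atPos, dif_pos (show n < 2 * k + 1 + 1 by omega),
      dif_pos (show n + 1 < 2 * k + 1 + 1 by omega)]
    exact h3.2
  · omega

lemma atPos_lay {k : ℕ} {p : Fin (2 * k + 1 + 1) → GVert k}
    (h : IsShortestSTPath (Gk k) GVert.s GVert.t (2 * k + 1) p) (n : ℕ) (hn : n < 2 * k + 1 + 1) :
    layV (atPos p n) = n := by
  simp only [atPos, dif_pos hn]
  exact shortest_lay h n hn

lemma shortest_level {k : ℕ} {p : Fin (2 * k + 1 + 1) → GVert k}
    (h : IsShortestSTPath (Gk k) GVert.s GVert.t (2 * k + 1) p) (l : ℕ) (hl : l < k) :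
    ∃ (i : Fin 7) (j : Fin 6), atPos p (2 * (k - 1 - l) + 1) = GVert.x ⟨l, hl⟩ i ∧
      atPos p (2 * (k - 1 - l) + 2) = GVert.y ⟨l, hl⟩ j ∧
      ((i : ℕ) = (j : ℕ) ∨ (i : ℕ) = (j : ℕ) + 1) := by
  obtain ⟨i, hi⟩ := lay_x _ l hl (atPos_lay h (2 * (k - 1 - l) + 1) (by omega))
  obtain ⟨j, hj⟩ := lay_y _ l hl (atPos_lay h (2 * (k - 1 - l) + 2) (by omega))
  refine ⟨i, j, hi, hj, ?_⟩
  have := shortest_rel h (2 * (k - 1 - l) + 1) (by omega)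
  rw [hi, hj] at this
  exact this.2

lemma valid_stOf {k : ℕ} {p : Fin (2 * k + 1 + 1) → GVert k}
    (h : IsShortestSTPath (Gk k) GVert.s GVert.t (2 * k + 1) p) : ValidSt k (stOf p) := by
  constructor
  · intro m hm
    obtain ⟨i, j, hi, hj, hij⟩ := shortest_level h m hm
    simp only [stOf, if_pos hm, hi, hj, idxV]
    omega
  · intro m hm
    obtain ⟨i, j, hi, hj, hij⟩ := shortest_level h m (by omega)
    obtain ⟨i', j', hi', hj', hij'⟩ := shortest_level h (m + 1) hm
    have e := shortest_rel h (2 * (k - 1 - (m + 1)) + 2) (by omega)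
    rw [show 2 * (k - 1 - (m + 1)) + 2 + 1 = 2 * (k - 1 - m) + 1 by omega, hj', hi] at e
    have e := e.2
    simp only [stOf, if_pos hm, if_pos (show m < k by omega), hi, hj, hi', hj', idxV, CompatLv]
    omega

lemma stOf_step {k : ℕ} {p q : Fin (2 * k + 1 + 1) → GVert k}
    (hp : IsShortestSTPath (Gk k) GVert.s GVert.t (2 * k + 1) p)
    (hq : IsShortestSTPath (Gk k) GVert.s GVert.t (2 * k + 1) q) (h : DiffOne p q) :
    |potl k (stOf p) - potl k (stOf q)| ≤ 1 := by
  obtain ⟨d, -, hd⟩ := h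
  have hd' : ∀ n, n ≠ (d : ℕ) → atPos p n = atPos q n := by
    intro n hn
    simp only [atPos]
    split_ifs with h
    · exact hd _ (fun e => hn (by rw [← e]))
    · rfl
  refine potl_lip k _ _ (valid_stOf hp) (valid_stOf hq) (k - 1 - ((d : ℕ) - 1) / 2) ?_ ?_ ?_
  iterate 2
    by_cases hk : (k - 1 - ((d : ℕ) - 1) / 2) < k
    · obtain ⟨i, j, hi, hj, hij⟩ := shortest_level hp _ hk
      obtain ⟨i', j', hi', hj', hij'⟩ := shortest_level hq _ hk
      simp only [stOf, if_pos hk, hi, hj, hi', hj', idxV]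
      by_cases c : 2 * (k - 1 - (k - 1 - ((d : ℕ) - 1) / 2)) + 1 = (d : ℕ)
      · have := hd' (2 * (k - 1 - (k - 1 - ((d : ℕ) - 1) / 2)) + 2) (by omega)
        rw [hj, hj'] at this
        injection this with _ this
        subst this
        omega
      · have := hd' (2 * (k - 1 - (k - 1 - ((d : ℕ) - 1) / 2)) + 1) (by omega)
        rw [hi, hi'] at this
        injection this with _ this
        subst this
        omega
    · simp only [stOf, if_neg hk]; omega
  · intro j hj
    simp only [stOf]
    split_ifs with hjk
    · rw [hd' (2 * (k - 1 - j) + 1) (by omega), hd' (2 * (k - 1 - j) + 2) (by omega)]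
    · rfl

/-- path of an abstract state -/
def toP (k : ℕ) (a : ℕ → ℕ) : Fin (2 * k + 1 + 1) → GVert k := fun d =>
  if h0 : (d : ℕ) = 0 then GVert.s
  else if h1 : (d : ℕ) ≤ 2 * k then
    if (d : ℕ) % 2 = 1 then GVert.x ⟨k - 1 - ((d : ℕ) - 1) / 2, by omega⟩
      ⟨min ((a (k - 1 - ((d : ℕ) - 1) / 2) + 1) / 2) 6, by omega⟩
    else GVert.y ⟨k - 1 - ((d : ℕ) - 1) / 2, by omega⟩
      ⟨min (a (k - 1 - ((d : ℕ) - 1) / 2) / 2) 5, by omega⟩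
  else GVert.t

lemma toP_shortest (k : ℕ) (hk : 1 ≤ k) (a : ℕ → ℕ) (ha : ValidSt k a) :
    IsShortestSTPath (Gk k) GVert.s GVert.t (2 * k + 1) (toP k a) := by
  apply isShortest_of
  · simp [toP]
  · simp [toP]
  · rintro ⟨d, hd⟩
    apply rel_adj
    simp only [toP, Fin.castSucc_mk, Fin.succ_mk]
    by_cases h0 : d = 0
    · subst h0
      simp [show 1 ≤ 2 * k by omega, gkRel]
    by_cases h1 : d = 2 * k
    · subst h1
      simp [show k ≠ 0 by omega, gkRel]
      omega
    rw [dif_neg h0, dif_pos (show d ≤ 2 * k by omega), dif_neg (show d + 1 ≠ 0 by omega),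
      dif_pos (show d + 1 ≤ 2 * k by omega)]
    by_cases h2 : d % 2 = 1
    · rw [if_pos h2, if_neg (show ¬ (d + 1) % 2 = 1 by omega)]
      have e : (d + 1 - 1) / 2 = (d - 1) / 2 := by omega
      have := ha.1 (k - 1 - (d - 1) / 2) (by omega)
      simp only [gkRel, e]
      exact ⟨trivial, by omega⟩
    · rw [if_neg h2, if_pos (show (d + 1) % 2 = 1 by omega)]
      have e : k - 1 - (d - 1) / 2 = k - 1 - (d + 1 - 1) / 2 + 1 := by omega
      have h3 := ha.1 (k - 1 - (d - 1) / 2) (by omega)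
      have h5 := ha.2 (k - 1 - (d + 1 - 1) / 2) (by omega)
      simp only [gkRel]
      rw [← e] at h5
      refine ⟨e, ?_⟩
      unfold CompatLv at h5
      generalize a (k - 1 - (d - 1) / 2) = u at *
      generalize a (k - 1 - (d + 1 - 1) / 2) = w at *
      omega

lemma toP_diff (k n : ℕ) (hn : n < k) (a b : ℕ → ℕ) (h : ∀ m, m ≠ n → a m = b m)
    (hb : b n = a n + 1) (hb' : b n ≤ 11) : DiffOne (toP k a) (toP k b) := by
  by_cases par : a n % 2 = 0
  · refine ⟨⟨2 * (k - 1 - n) + 1, by omega⟩, ?_, ?_⟩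
    · have e : k - 1 - (2 * (k - 1 - n) + 1 - 1) / 2 = n := by omega
      simp only [toP]
      rw [dif_neg (by omega), dif_pos (by omega), if_pos (by omega),
        dif_neg (by omega), dif_pos (by omega), if_pos (by omega)]
      simp only [e, ne_eq, GVert.x.injEq, Fin.mk.injEq, true_and]
      omega
    · rintro ⟨d, hd⟩ hne
      have hne : d ≠ 2 * (k - 1 - n) + 1 := fun e => hne (by subst e; rfl)
      simp only [toP]
      split_ifs with h0 h1 h2
      · rfl
      · simp only [h (k - 1 - (d - 1) / 2) (by omega)]
      · by_cases e : k - 1 - (d - 1) / 2 = n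
        · simp only [e, GVert.y.injEq, Fin.mk.injEq, true_and]
          omega
        · simp only [h _ e]
      · rfl
  · refine ⟨⟨2 * (k - 1 - n) + 2, by omega⟩, ?_, ?_⟩
    · have e : k - 1 - (2 * (k - 1 - n) + 2 - 1) / 2 = n := by omega
      simp only [toP]
      rw [dif_neg (by omega), dif_pos (by omega), if_neg (by omega),
        dif_neg (by omega), dif_pos (by omega), if_neg (by omega)]
      simp only [e, ne_eq, GVert.y.injEq, Fin.mk.injEq, true_and]
      omega
    · rintro ⟨d, hd⟩ hne
      have hne : d ≠ 2 * (k - 1 - n) + 2 := fun e => hne (by subst e; rfl)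
      simp only [toP]
      split_ifs with h0 h1 h2
      · rfl
      · by_cases e : k - 1 - (d - 1) / 2 = n
        · simp only [e, GVert.x.injEq, Fin.mk.injEq, true_and]
          omega
        · simp only [h _ e]
      · simp only [h (k - 1 - (d - 1) / 2) (by omega)]
      · rfl

/-- reachability in `l` steps -/
def RStep (k l : ℕ) (a b : ℕ → ℕ) : Prop :=
  ∃ ρ, SPReconfSeq (Gk k) GVert.s GVert.t (2 * k + 1) ρ l (toP k a) (toP k b)

lemma DiffOne.symm' {N : ℕ} {α : Type*} {p q : Fin N → α} (h : DiffOne p q) : DiffOne q p := by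
  obtain ⟨i, h1, h2⟩ := h
  exact ⟨i, h1.symm, fun j hj => (h2 j hj).symm⟩

lemma RStep.symm {k l : ℕ} {a b : ℕ → ℕ} (h : RStep k l a b) : RStep k l b a := by
  obtain ⟨ρ, h0, h1, h2, h3⟩ := h
  refine ⟨fun i => ρ (l - i), by simpa using h1, by simpa using h0,
    fun i hi => h2 _ (by omega), fun i hi => ?_⟩
  have := (h3 (l - (i + 1)) (by omega)).symm'
  rwa [show l - (i + 1) + 1 = l - i by omega] at this

lemma RStep.trans {k l l' : ℕ} {a b c : ℕ → ℕ} (h : RStep k l a b) (h' : RStep k l' b c) :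
    RStep k (l + l') a c := by
  obtain ⟨ρ, h0, h1, h2, h3⟩ := h
  obtain ⟨ρ', h0', h1', h2', h3'⟩ := h'
  have key : ∀ i, l ≤ i → (if i ≤ l then ρ i else ρ' (i - l)) = ρ' (i - l) := by
    intro i hi
    split_ifs with h
    · have : i = l := by omega
      subst this
      simp [h1, h0']
    · rfl
  refine ⟨fun i => if i ≤ l then ρ i else ρ' (i - l), by simpa using h0, ?_, ?_, ?_⟩
  · simp only []
    rw [key _ (by omega)]; simpa using h1'
  · intro i hi
    simp only []
    split_ifs with h
    · exact h2 _ h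
    · exact h2' _ (by omega)
  · intro i hi
    by_cases h : i < l
    · simp only [if_pos h.le, if_pos (show i + 1 ≤ l by omega)]
      exact h3 _ h
    · simp only []
      rw [key _ (by omega), key _ (by omega), show i + 1 - l = i - l + 1 by omega]
      exact h3' _ (by omega)

lemma RStep.refl {k : ℕ} (hk : 1 ≤ k) {a : ℕ → ℕ} (h : ValidSt k a) : RStep k 0 a a :=
  ⟨fun _ => toP k a, rfl, rfl, fun _ _ => toP_shortest k hk a h, fun i hi => by omega⟩

lemma RStep.one {k : ℕ} (hk : 1 ≤ k) {a b : ℕ → ℕ} (ha : ValidSt k a) (hb : ValidSt k b)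
    (h : DiffOne (toP k a) (toP k b)) : RStep k 1 a b := by
  refine ⟨fun i => if i = 0 then toP k a else toP k b, rfl, rfl, fun i _ => ?_, fun i hi => ?_⟩
  · simp only []
    split_ifs
    · exact toP_shortest k hk a ha
    · exact toP_shortest k hk b hb
  · have : i = 0 := by omega
    subst this
    simpa using h

/-- state with levels above `n` given by `a`, level `n` at `v`, level `n-1` at `w`, rest zero -/
def FSt (n : ℕ) (a : ℕ → ℕ) (v w : ℕ) : ℕ → ℕ := fun m =>
  if n < m then a m else if m = n then v else if m + 1 = n then w else 0

/-- The part of the state at levels at least `n` is fine and level `n` leaves the rest free. -/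
def UpOK (k n : ℕ) (a : ℕ → ℕ) : Prop :=
  (∀ m, n ≤ m → m < k → a m ≤ 11) ∧ (∀ m, n ≤ m → m + 1 < k → CompatLv (a (m + 1)) (a m)) ∧
  (n < k → a n / 2 % 2 = 0)

lemma FSt_valid {k n : ℕ} {a : ℕ → ℕ} (h : UpOK k (n + 1) a) {v w : ℕ} (hv : v ≤ 11) (hw : w = 0 ∨ w = 11)
    (hvw : 0 < n → CompatLv v w) : ValidSt k (FSt n a v w) := by
  obtain ⟨h1, h2, h3⟩ := h
  constructor
  · intro m hm
    simp only [FSt]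
    split_ifs
    · exact h1 m (by omega) hm
    all_goals omega
  · intro m hm
    rcases lt_trichotomy m n with c | c | c
    · by_cases c' : m + 1 = n
      · subst c'
        simpa [FSt] using hvw (by omega)
      · simp only [FSt]
        unfold CompatLv
        split_ifs <;> first | omega | simp
    · subst c
      have := h3 hm
      simp only [FSt, CompatLv]
      simp
      omega
    · simp only [FSt]
      rw [if_pos (by omega), if_pos (by omega)]
      exact h2 m (by omega) hm

lemma FSt_step {k n : ℕ} (hn : n < k) {a : ℕ → ℕ} (h : UpOK k (n + 1) a) {v w : ℕ} (hv : v + 1 ≤ 11)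
    (hw : w = 0 ∨ w = 11) (h1 : CompatLv v w) (h2 : CompatLv (v + 1) w) :
    RStep k 1 (FSt n a v w) (FSt n a (v + 1) w) := by
  refine RStep.one (by omega) (FSt_valid h (by omega) hw fun _ => h1)
    (FSt_valid h (by omega) hw fun _ => h2) (toP_diff k n hn _ _ ?_ ?_ ?_)
  · intro m hm
    simp [FSt, hm]
  · simp [FSt]
  · simpa [FSt] using hv

lemma FSt_steps {k n : ℕ} (hn : n < k) {a : ℕ → ℕ} (h : UpOK k (n + 1) a) {v w : ℕ} (c : ℕ)
    (hv : v + c ≤ 11) (hw : w = 0 ∨ w = 11) (h1 : ∀ i ≤ c, CompatLv (v + i) w) :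
    RStep k c (FSt n a v w) (FSt n a (v + c) w) := by
  induction c with
  | zero => exact RStep.refl (by omega) (FSt_valid h hv hw fun _ => h1 0 le_rfl)
  | succ c ih =>
    exact (ih (by omega) (fun i hi => h1 i (by omega))).trans
      (FSt_step hn h hv hw (h1 c (by omega)) (h1 (c + 1) le_rfl))

lemma main_up (k n : ℕ) (hn : n < k) (a : ℕ → ℕ) (h : UpOK k (n + 1) a) :
    RStep k (11 * (2 ^ (n + 1) - 1)) (FSt n a 0 0) (FSt n a 11 0) := by
  induction n generalizing a with
  | zero =>
    have e : ∀ v w, FSt 0 a v w = FSt 0 a v 0 := by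
      intro v w; funext m; simp [FSt]
    have A := FSt_steps hn h (v := 0) (w := 0) 4 (by omega) (by omega) (by unfold CompatLv; omega)
    have B := FSt_steps hn h (v := 4) (w := 11) 4 (by omega) (by omega) (by unfold CompatLv; omega)
    have C := FSt_steps hn h (v := 8) (w := 0) 3 (by omega) (by omega) (by unfold CompatLv; omega)
    rw [e _ 11, e _ 11] at B
    exact (A.trans B).trans C
  | succ n ih =>
    have A := FSt_steps hn h (v := 0) (w := 0) 4 (by omega) (by omega) (by unfold CompatLv; omega)
    have B := FSt_steps hn h (v := 4) (w := 11) 4 (by omega) (by omega) (by unfold CompatLv; omega)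
    have C := FSt_steps hn h (v := 8) (w := 0) 3 (by omega) (by omega) (by unfold CompatLv; omega)
    have D : ∀ v, v = 4 ∨ v = 8 →
        RStep k (11 * (2 ^ (n + 1) - 1)) (FSt (n + 1) a v 0) (FSt (n + 1) a v 11) := by
      intro v hv
      have hval := FSt_valid h (v := v) (w := 0) (by omega) (by omega) (by unfold CompatLv; omega)
      have := ih (by omega) (FSt (n + 1) a v 0) ⟨fun m _ hm => hval.1 m hm,
        fun m _ hm => hval.2 m hm, fun _ => by simp [FSt]; omega⟩
      have e : ∀ w, FSt n (FSt (n + 1) a v 0) w 0 = FSt (n + 1) a v w := by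
        intro w
        funext m
        simp only [FSt]
        split_ifs <;> first | rfl | omega
      rwa [e, e] at this
    have := (((A.trans (D 4 (by simp))).trans B).trans (D 8 (by simp)).symm).trans C
    convert this using 1
    have : 1 ≤ 2 ^ (n + 1) := Nat.one_le_two_pow
    rw [pow_succ 2 (n + 1)]
    omega

lemma toP_pb (k : ℕ) (hk : 1 ≤ k) : toP k (FSt (k - 1) (fun _ => 0) 0 0) = pbG k := by
  have : FSt (k - 1) (fun _ => 0) 0 0 = fun _ => 0 := by
    funext m; simp [FSt]
  rw [this]
  funext d
  simp [toP, pbG]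

lemma toP_pe (k : ℕ) (hk : 1 ≤ k) : toP k (FSt (k - 1) (fun _ => 0) 11 0) = peG k hk := by
  funext ⟨d, hd⟩
  simp only [peG, pbG, toP]
  by_cases h1 : d = 1
  · subst h1
    simp [FSt, show 1 ≤ 2 * k by omega]
  by_cases h2 : d = 2
  · subst h2
    simp [FSt, show 2 ≤ 2 * k by omega]
  rw [if_neg h1, if_neg h2]
  split_ifs with h3 h4 h5
  · rfl
  · have : k - 1 - (d - 1) / 2 ≠ k - 1 := by omega
    simp [FSt, this]
  · have : k - 1 - (d - 1) / 2 ≠ k - 1 := by omega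
    simp [FSt, this]
  · rfl

lemma card_GVert (k : ℕ) : Fintype.card (GVert k) = 13 * k + 2 := by
  let e : GVert k ≃ (Unit ⊕ Unit) ⊕ (Fin k × Fin 7) ⊕ (Fin k × Fin 6) :=
    { toFun := fun v => match v with
        | GVert.s => Sum.inl (Sum.inl ())
        | GVert.t => Sum.inl (Sum.inr ())
        | GVert.x l i => Sum.inr (Sum.inl (l, i))
        | GVert.y l i => Sum.inr (Sum.inr (l, i))
      invFun := fun v => match v with
        | Sum.inl (Sum.inl _) => GVert.s
        | Sum.inl (Sum.inr _) => GVert.t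
        | Sum.inr (Sum.inl (l, i)) => GVert.x l i
        | Sum.inr (Sum.inr (l, i)) => GVert.y l i
      left_inv := by rintro (_ | _ | _ | _) <;> rfl
      right_inv := by rintro ((_ | _) | (_ | _)) <;> rfl }
  rw [Fintype.card_congr e]
  simp
  ring

theorem stmt2 (k : ℕ) (hk : 1 ≤ k) :
    (∀ (ℓ : ℕ) (ρ : ℕ → (Fin (2 * k + 1 + 1) → GVert k)),
        SPReconfSeq (Gk k) GVert.s GVert.t (2 * k + 1) ρ ℓ (pbG k) (peG k hk) →
          9 * (2 ^ k - 1) ≤ ℓ) ∧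
    (∃ ℓ ≤ 11 * (2 ^ k - 1), ∃ ρ : ℕ → (Fin (2 * k + 1 + 1) → GVert k),
        SPReconfSeq (Gk k) GVert.s GVert.t (2 * k + 1) ρ ℓ (pbG k) (peG k hk)) ∧
    Fintype.card (GVert k) = 13 * k + 2 := by
  refine ⟨?_, ?_, card_GVert k⟩
  · intro ℓ ρ ⟨h0, h1, h2, h3⟩
    have key : ∀ i ≤ ℓ, potl k (stOf (ρ i)) ≤ potl k (stOf (ρ 0)) + i := by
      intro i
      induction i with
      | zero => simp
      | succ i ih =>
        intro hi
        have a := ih (by omega)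
        have b := stOf_step (h2 i (by omega)) (h2 (i + 1) hi) (h3 i (by omega))
        rw [abs_le] at b
        push_cast
        linarith [b.1]
    have e := key ℓ le_rfl
    rw [h0, h1] at e
    rw [potl_zero k (stOf (pbG k)), potl_top k (stOf (peG k hk))] at e
    · have : 1 ≤ 2 ^ k := Nat.one_le_two_pow
      zify [this]
      have : (1 : ℤ) ≤ 2 ^ k := by exact_mod_cast this
      linarith
    · intro _
      have : k - 1 < k := by omega
      simp [stOf, this, atPos, peG, idxV, show 1 < 2 * k + 1 + 1 by omega,
        show 2 < 2 * k + 1 + 1 by omega]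
    · intro _
      have : k - 1 < k := by omega
      simp [stOf, this, atPos, pbG, idxV, show 1 ≤ 2 * k by omega, show 2 ≤ 2 * k by omega,
        show 1 < 2 * k + 1 + 1 by omega, show 2 < 2 * k + 1 + 1 by omega]
  · refine ⟨_, le_rfl, ?_⟩
    have := main_up k (k - 1) (by omega) (fun _ => 0)
      ⟨fun _ _ _ => by omega, fun _ _ _ => by simp [CompatLv], fun _ => by simp⟩
    rw [Nat.sub_add_cancel hk] at this
    obtain ⟨ρ, hρ⟩ := this
    rw [toP_pb k hk, toP_pe k hk] at hρ
    exact ⟨ρ, hρ⟩
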